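/- For Gaussian-mixture training data with component covariance σ₀² I_D, the posterior covariance of the proxy score satisfies, for every x ∈ ℝ^D, Cov_{π_x}( s̃(x; ·) ) = S^{-1} − Σ̃^{-1} + α² Σ̃^{-1} Cov_{w̃}(μ)(x) Σ̃^{-1}, where Σ̃ := α² σ₀² I_D + S, Cov_{π_x}(s̃) := ∫ s̃(x; x₀) s̃(x; x₀)ᵀ π_x(x₀) dx₀ − (∫ s̃(x; x₀) π_x(x₀) dx₀)(∫ s̃(x; x₀) π_x(x₀) dx₀)ᵀ, and Cov_{w̃}(μ)(x) := Σ_m w̃_m(x) μ_m μ_mᵀ − (Σ_m w̃_m(x) μ_m)(Σ_m w̃_m(x) μ_m)ᵀ. -/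

import Mathlib

open Matrix MeasureTheory BigOperators

/-- Multivariate Gaussian density `N(x; m, S)`. -/
noncomputable def gaussDensity {D : ℕ} (S : Matrix (Fin D) (Fin D) ℝ) (m x : Fin D → ℝ) : ℝ :=
  ((2 * Real.pi) ^ D * S.det) ^ (-(1/2) : ℝ) *
    Real.exp (-((x - m) ⬝ᵥ S⁻¹.mulVec (x - m)) / 2)

/-- Gaussian-mixture data density `p₀(x₀) = (1/M) ∑ₘ N(x₀; μₘ, σ₀² I)`. -/
noncomputable def dataDensity {D M : ℕ} (μ : Fin M → Fin D → ℝ) (σ₀ : ℝ)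
    (x₀ : Fin D → ℝ) : ℝ :=
  (M : ℝ)⁻¹ * ∑ m, gaussDensity (σ₀ ^ 2 • (1 : Matrix (Fin D) (Fin D) ℝ)) (μ m) x₀

/-- Transition density `p(x | x₀) = N(x; α x₀, S)`. -/
noncomputable def transDensity {D : ℕ} (α : ℝ) (S : Matrix (Fin D) (Fin D) ℝ)
    (x x₀ : Fin D → ℝ) : ℝ :=
  gaussDensity S (α • x₀) x

/-- Marginal `p(x) = ∫ p(x | x₀) p₀(x₀) dx₀`. -/
noncomputable def margDensity {D M : ℕ} (μ : Fin M → Fin D → ℝ) (σ₀ α : ℝ)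
    (S : Matrix (Fin D) (Fin D) ℝ) (x : Fin D → ℝ) : ℝ :=
  ∫ x₀ : Fin D → ℝ, transDensity α S x x₀ * dataDensity μ σ₀ x₀

/-- Posterior density `π_x(x₀) = p(x | x₀) p₀(x₀) / p(x)`. -/
noncomputable def postDensity {D M : ℕ} (μ : Fin M → Fin D → ℝ) (σ₀ α : ℝ)
    (S : Matrix (Fin D) (Fin D) ℝ) (x x₀ : Fin D → ℝ) : ℝ :=
  transDensity α S x x₀ * dataDensity μ σ₀ x₀ / margDensity μ σ₀ α S x

/-- The proxy score `s̃(x; x₀) = S⁻¹ (α x₀ − x)`. -/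
noncomputable def proxyScore {D : ℕ} (α : ℝ) (S : Matrix (Fin D) (Fin D) ℝ)
    (x x₀ : Fin D → ℝ) : Fin D → ℝ :=
  S⁻¹.mulVec (α • x₀ - x)

/-- Posterior covariance of the proxy score,
`Cov_{π_x}(s̃) = ∫ s̃ s̃ᵀ π_x − (∫ s̃ π_x)(∫ s̃ π_x)ᵀ`. -/
noncomputable def proxyPostCov {D M : ℕ} (μ : Fin M → Fin D → ℝ) (σ₀ α : ℝ)
    (S : Matrix (Fin D) (Fin D) ℝ) (x : Fin D → ℝ) : Matrix (Fin D) (Fin D) ℝ :=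
  Matrix.of fun i j =>
    (∫ x₀ : Fin D → ℝ,
        proxyScore α S x x₀ i * proxyScore α S x x₀ j * postDensity μ σ₀ α S x x₀) -
      (∫ x₀ : Fin D → ℝ, proxyScore α S x x₀ i * postDensity μ σ₀ α S x x₀) *
        (∫ x₀ : Fin D → ℝ, proxyScore α S x x₀ j * postDensity μ σ₀ α S x x₀)

/-- Posterior weights `w̃ₘ(x) = N(x; α μₘ, Σ̃) / ∑ₘ' N(x; α μₘ', Σ̃)`. -/
noncomputable def mixW {D M : ℕ} (μ : Fin M → Fin D → ℝ) (α : ℝ)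
    (Sig : Matrix (Fin D) (Fin D) ℝ) (m : Fin M) (x : Fin D → ℝ) : ℝ :=
  gaussDensity Sig (α • μ m) x / ∑ m', gaussDensity Sig (α • μ m') x

/-- Posterior mean of the mixture centers, `∑ₘ w̃ₘ(x) μₘ`. -/
noncomputable def mixMean {D M : ℕ} (μ : Fin M → Fin D → ℝ) (α : ℝ)
    (Sig : Matrix (Fin D) (Fin D) ℝ) (x : Fin D → ℝ) : Fin D → ℝ :=
  ∑ m, mixW μ α Sig m x • μ m

/-- Posterior covariance of the mixture centers,
`Cov_w̃(μ)(x) = ∑ₘ w̃ₘ(x) μₘ μₘᵀ − μ̄(x) μ̄(x)ᵀ`. -/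
noncomputable def mixCovMu {D M : ℕ} (μ : Fin M → Fin D → ℝ) (α : ℝ)
    (Sig : Matrix (Fin D) (Fin D) ℝ) (x : Fin D → ℝ) : Matrix (Fin D) (Fin D) ℝ :=
  (∑ m, mixW μ α Sig m x • vecMulVec (μ m) (μ m)) -
    vecMulVec (mixMean μ α Sig x) (mixMean μ α Sig x)

/-!
Completing the square in `y` gives the linear-Gaussian factorization
`N(x; A y, S) N(y; m, T) = N(x; A m, Σ) N(y; b m, C)` with `Σ = S + A T Aᵀ`, where the covariance
`C` does not depend on `m`. Hence the posterior of a Gaussian mixture with shared covariance `T` is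
a Gaussian mixture with shared covariance `C`, and the law of total covariance splits the covariance
of the score `S⁻¹ (A y - x)` into two parts. Within components it is `S⁻¹ A C Aᵀ S⁻¹ = S⁻¹ - Σ⁻¹`,
by Woodbury's identity; between components, `S⁻¹ (A (b m) - x) = Σ⁻¹ (A m - x)` turns the covariance
of the component means into `Σ⁻¹ A Cov(μ) Aᵀ Σ⁻¹`.
-/

open ProbabilityTheory Module WithLp
open scoped MatrixOrder

section StdGaussian

variable (E : Type*) [NormedAddCommGroup E] [InnerProductSpace ℝ E] [FiniteDimensional ℝ E]
  [MeasurableSpace E] [BorelSpace E]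

lemma integrable_exp_neg_norm_sq_div_two :
    Integrable fun x : E ↦ Real.exp (-‖x‖ ^ 2 / 2) := by
  have h := GaussianFourier.integral_rexp_neg_mul_sq_norm (V := E) one_half_pos
  have hpos : 0 < (Real.pi / (1 / 2)) ^ (finrank ℝ E / 2 : ℝ) := by positivity
  rw [← h] at hpos
  convert! Integrable.of_integral_ne_zero hpos.ne' using 3
  ring

lemma stdGaussian_eq_withDensity :
    stdGaussian E = volume.withDensity fun x ↦
      ENNReal.ofReal (((2 * Real.pi) ^ (finrank ℝ E / 2 : ℝ))⁻¹ * Real.exp (-‖x‖ ^ 2 / 2)) := by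
  set Z : ℝ := (2 * Real.pi) ^ (finrank ℝ E / 2 : ℝ)
  have hZ : (Z : ℂ) ≠ 0 := Complex.ofReal_ne_zero.2 (by positivity)
  have := isFiniteMeasure_withDensity_ofReal
    ((integrable_exp_neg_norm_sq_div_two E).const_mul Z⁻¹).hasFiniteIntegral
  refine Measure.ext_of_charFun (funext fun t ↦ ?_)
  have hfourier : ∫ x : E, Complex.exp (-(1 / 2) * ‖x‖ ^ 2 + Complex.I * inner ℝ t x) =
      Z * Complex.exp (-‖t‖ ^ 2 / 2) := by
    rw [GaussianFourier.integral_cexp_neg_mul_sq_norm_add (by norm_num),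
      Complex.ofReal_cpow (by positivity), Complex.I_sq]
    push_cast
    ring_nf
  calc charFun (stdGaussian E) t
    _ = (Z : ℂ)⁻¹ * ∫ x : E, Complex.exp (-(1 / 2) * ‖x‖ ^ 2 + Complex.I * inner ℝ t x) := by
      rw [charFun_stdGaussian, hfourier, inv_mul_cancel_left₀ hZ]
    _ = _ := by
      rw [charFun_apply, integral_withDensity_eq_integral_toReal_smul (by fun_prop) (by simp),
        ← integral_const_mul]
      refine integral_congr_ae (.of_forall fun x ↦ ?_)
      dsimp only
      rw [ENNReal.toReal_ofReal (by positivity), Complex.real_smul, real_inner_comm,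
        Complex.exp_add]
      push_cast
      ring_nf

end StdGaussian

section GaussDensity

variable {D : ℕ} {R S T : Matrix (Fin D) (Fin D) ℝ}

lemma gaussDensity_pos (hS : S.PosDef) (m x : Fin D → ℝ) : 0 < gaussDensity S m x := by
  have := hS.det_pos
  unfold gaussDensity
  positivity

@[fun_prop]
lemma continuous_gaussDensity (S : Matrix (Fin D) (Fin D) ℝ) (m : Fin D → ℝ) :
    Continuous (gaussDensity S m) := by
  unfold gaussDensity
  fun_prop

lemma abs_det_mul_gaussDensity_mulVec_add (hR : IsUnit R) (hT : 0 ≤ T.det)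
    (m c z : Fin D → ℝ) :
    |R.det| * gaussDensity (R * T * Rᵀ) (R *ᵥ m + c) (R *ᵥ z + c) = gaussDensity T m z := by
  have hRdet : IsUnit R.det := (isUnit_iff_isUnit_det R).1 hR
  have hconst : ((2 * Real.pi) ^ D * (R * T * Rᵀ).det) ^ (-(1/2) : ℝ) =
      |R.det|⁻¹ * ((2 * Real.pi) ^ D * T.det) ^ (-(1/2) : ℝ) := by
    have hdet : (2 * Real.pi) ^ D * (R * T * Rᵀ).det =
        |R.det| ^ (2 : ℝ) * ((2 * Real.pi) ^ D * T.det) := by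
      rw [det_mul, det_mul, det_transpose, Real.rpow_two, sq_abs]
      ring
    rw [hdet, Real.mul_rpow (by positivity) (by positivity), ← Real.rpow_mul (by positivity)]
    norm_num [Real.rpow_neg_one]
  have hquad : (R *ᵥ (z - m)) ⬝ᵥ (R * T * Rᵀ)⁻¹ *ᵥ R *ᵥ (z - m) = (z - m) ⬝ᵥ T⁻¹ *ᵥ (z - m) := by
    have hinv : Rᵀ * ((R * T * Rᵀ)⁻¹ * R) = T⁻¹ := by
      rw [Matrix.mul_inv_rev, Matrix.mul_inv_rev, Matrix.mul_assoc,
        mul_nonsing_inv_cancel_left _ _ (by rwa [det_transpose]),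
        nonsing_inv_mul_cancel_right _ _ hRdet]
    rw [mulVec_mulVec, ← vecMul_transpose R, ← dotProduct_mulVec, mulVec_mulVec, hinv]
  rw [gaussDensity, gaussDensity, add_sub_add_right_eq_sub, ← mulVec_sub, hquad, hconst,
    ← mul_assoc, ← mul_assoc, mul_inv_cancel₀ (abs_ne_zero.2 hRdet.ne_zero), one_mul]

lemma abs_det_mul_lintegral_mulVec_add (hR : IsUnit R) (c : Fin D → ℝ)
    {f : (Fin D → ℝ) → ENNReal} (hf : Measurable f) :
    ENNReal.ofReal |R.det| * ∫⁻ z, f (R *ᵥ z + c) = ∫⁻ y, f y := by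
  have hRdet : R.det ≠ 0 := ((isUnit_iff_isUnit_det R).1 hR).ne_zero
  have hmap := lintegral_map (μ := volume) (f := fun y ↦ f (y + c)) (g := toLin' R)
    (by fun_prop) (by fun_prop)
  rw [Real.map_matrix_volume_pi_eq_smul_volume_pi hRdet, lintegral_smul_measure,
    lintegral_add_right_eq_self] at hmap
  simp only [toLin'_apply] at hmap
  rw [← hmap, smul_eq_mul, ← mul_assoc, ← ENNReal.ofReal_mul (abs_nonneg _), ← abs_mul,
    mul_inv_cancel₀ hRdet, abs_one, ENNReal.ofReal_one, one_mul]

lemma map_toLp_withDensity_gaussDensity_zero_one :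
    (volume.withDensity fun z ↦ ENNReal.ofReal (gaussDensity 1 0 z)).map (toLp 2) =
      stdGaussian (EuclideanSpace ℝ (Fin D)) := by
  have hdensity (z : Fin D → ℝ) : gaussDensity 1 0 z =
      ((2 * Real.pi) ^ (D / 2 : ℝ))⁻¹ * Real.exp (-‖toLp 2 z‖ ^ 2 / 2) := by
    rw [gaussDensity, det_one, mul_one, inv_one, one_mulVec, sub_zero,
      ← Real.rpow_natCast_mul (by positivity), ← Real.rpow_neg (by positivity),
      EuclideanSpace.real_norm_sq_eq, dotProduct]
    congr 2
    · ring
    · simp only [sq]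
  refine Measure.ext_of_lintegral _ fun f hf ↦ ?_
  rw [lintegral_map hf (by fun_prop),
    lintegral_withDensity_eq_lintegral_mul _ (by fun_prop) (by fun_prop),
    stdGaussian_eq_withDensity, lintegral_withDensity_eq_lintegral_mul _ (by fun_prop) hf,
    ← (PiLp.volume_preserving_toLp (Fin D)).lintegral_comp (by fun_prop)]
  simp only [Pi.mul_apply, hdensity, finrank_euclideanSpace, Fintype.card_fin]

lemma map_toLp_withDensity_gaussDensity (hS : S.PosDef) (m : Fin D → ℝ) :
    (volume.withDensity fun x ↦ ENNReal.ofReal (gaussDensity S m x)).map (toLp 2) =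
      multivariateGaussian (toLp 2 m) S := by
  have hsq : CFC.sqrt S * CFC.sqrt S = S := CFC.sqrt_mul_sqrt_self _ hS.posSemidef.nonneg
  have hsymm : (CFC.sqrt S)ᵀ = CFC.sqrt S := (CFC.sqrt_nonneg S).isSelfAdjoint
  have hunit : IsUnit (CFC.sqrt S) := isUnit_of_mul_isUnit_left (hsq ▸ hS.isUnit)
  have hdensity (z : Fin D → ℝ) :
      |(CFC.sqrt S).det| * gaussDensity S m (CFC.sqrt S *ᵥ z + m) = gaussDensity 1 0 z := by
    have h := abs_det_mul_gaussDensity_mulVec_add hunit (T := 1) (by simp) 0 m z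
    rwa [mul_one, hsymm, hsq, mulVec_zero, zero_add] at h
  rw [multivariateGaussian, ← map_toLp_withDensity_gaussDensity_zero_one]
  refine Measure.ext_of_lintegral _ fun f hf ↦ ?_
  rw [lintegral_map hf (by fun_prop),
    lintegral_withDensity_eq_lintegral_mul _ (by fun_prop) (by fun_prop),
    lintegral_map hf (by fun_prop), lintegral_map (by fun_prop) (by fun_prop),
    lintegral_withDensity_eq_lintegral_mul _ (by fun_prop) (by fun_prop),
    ← abs_det_mul_lintegral_mulVec_add hunit m (by fun_prop),
    ← lintegral_const_mul _ (by fun_prop)]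
  refine lintegral_congr fun z ↦ ?_
  simp only [Pi.mul_apply, ← hdensity, ENNReal.ofReal_mul (abs_nonneg _), mul_assoc]
  congr 3
  rw [add_comm]
  rfl

lemma integrable_mul_gaussDensity_iff (hS : S.PosDef) (m : Fin D → ℝ) (g : (Fin D → ℝ) → ℝ) :
    Integrable (fun y ↦ g y * gaussDensity S m y) ↔
      Integrable (fun y ↦ g (ofLp y)) (multivariateGaussian (toLp 2 m) S) := by
  have h := integrable_map_equiv
    (μ := volume.withDensity fun x ↦ ENNReal.ofReal (gaussDensity S m x))
    (MeasurableEquiv.toLp 2 (Fin D → ℝ)) (fun y ↦ g (ofLp y))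
  rw [MeasurableEquiv.coe_toLp, map_toLp_withDensity_gaussDensity hS] at h
  rw [h, integrable_withDensity_iff_integrable_smul' (by fun_prop) (by simp)]
  simp [ENNReal.toReal_ofReal (gaussDensity_pos hS m _).le, mul_comm]

lemma integral_mul_gaussDensity (hS : S.PosDef) (m : Fin D → ℝ) (g : (Fin D → ℝ) → ℝ) :
    ∫ y, g y * gaussDensity S m y = ∫ y, g (ofLp y) ∂multivariateGaussian (toLp 2 m) S := by
  have h := integral_map_equiv
    (μ := volume.withDensity fun x ↦ ENNReal.ofReal (gaussDensity S m x))
    (MeasurableEquiv.toLp 2 (Fin D → ℝ)) (fun y ↦ g (ofLp y))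
  rw [MeasurableEquiv.coe_toLp, map_toLp_withDensity_gaussDensity hS,
    integral_withDensity_eq_integral_toReal_smul (by fun_prop) (by simp)] at h
  simp [h, ENNReal.toReal_ofReal (gaussDensity_pos hS m _).le, mul_comm]

lemma integral_gaussDensity (hS : S.PosDef) (m : Fin D → ℝ) : ∫ y, gaussDensity S m y = 1 := by
  simpa using integral_mul_gaussDensity hS m 1

lemma integrable_gaussDensity (hS : S.PosDef) (m : Fin D → ℝ) : Integrable (gaussDensity S m) :=
  .of_integral_ne_zero (by simp [integral_gaussDensity hS m])

end GaussDensity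

section MultivariateGaussian

variable {D : ℕ} {κ : Type*} {S : Matrix (Fin D) (Fin D) ℝ}

lemma mulVec_apply_eq_inner (B : Matrix κ (Fin D) ℝ) (i : κ) (y : EuclideanSpace ℝ (Fin D)) :
    (B *ᵥ ofLp y) i = inner ℝ (toLp 2 (B.row i)) y := by
  rw [EuclideanSpace.inner_eq_star_dotProduct, star_trivial, dotProduct_comm]
  rfl

lemma memLp_mulVec_add_multivariateGaussian (B : Matrix κ (Fin D) ℝ) (c : κ → ℝ)
    (S : Matrix (Fin D) (Fin D) ℝ) (m : EuclideanSpace ℝ (Fin D)) (i : κ) :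
    MemLp (fun y ↦ (B *ᵥ ofLp y + c) i) 2 (multivariateGaussian m S) := by
  have h : MemLp (fun y ↦ inner ℝ (toLp 2 (B.row i)) y) 2 (multivariateGaussian m S) :=
    IsGaussian.memLp_two_id.const_inner _
  simp only [Pi.add_apply, mulVec_apply_eq_inner]
  exact h.add (memLp_const (c i))

lemma integral_mulVec_add_multivariateGaussian (B : Matrix κ (Fin D) ℝ) (c : κ → ℝ)
    (S : Matrix (Fin D) (Fin D) ℝ) (m : EuclideanSpace ℝ (Fin D)) (i : κ) :
    ∫ y, (B *ᵥ ofLp y + c) i ∂multivariateGaussian m S = (B *ᵥ ofLp m + c) i := by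
  simp only [Pi.add_apply, mulVec_apply_eq_inner]
  rw [integral_add (IsGaussian.integrable_id.const_inner _) (integrable_const _), integral_const,
    integral_inner IsGaussian.integrable_fun_id, integral_id_multivariateGaussian,
    probReal_univ, one_smul]

lemma covariance_mulVec_add_multivariateGaussian (hS : S.PosSemidef) (B : Matrix κ (Fin D) ℝ)
    (c : κ → ℝ) (m : EuclideanSpace ℝ (Fin D)) (i j : κ) :
    cov[fun y ↦ (B *ᵥ ofLp y + c) i, fun y ↦ (B *ᵥ ofLp y + c) j; multivariateGaussian m S] =
      (B * S * Bᵀ) i j := by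
  have hint (i : κ) :
      Integrable (fun y ↦ inner ℝ (toLp 2 (B.row i)) y) (multivariateGaussian m S) :=
    IsGaussian.integrable_id.const_inner _
  simp only [Pi.add_apply, mulVec_apply_eq_inner]
  rw [covariance_add_const_left (hint i), covariance_add_const_right (hint j),
    ← covarianceBilin_apply_eq_cov IsGaussian.memLp_two_id,
    covarianceBilin_multivariateGaussian hS, dotProduct_mulVec]
  rfl

end MultivariateGaussian

section DensityCov

variable {Ω ι κ κ' : Type*} [MeasurableSpace Ω] {ν : Measure Ω}

/-- The mean `∫ f p dν` of a vector statistic `f` under the density `p` with respect to `ν`. -/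
noncomputable def densityMean (ν : Measure Ω) (p : Ω → ℝ) (f : Ω → κ → ℝ) : κ → ℝ :=
  fun i ↦ ∫ ω, f ω i * p ω ∂ν

/-- The covariance matrix `∫ f fᵀ p dν - (∫ f p dν) (∫ f p dν)ᵀ` of a vector statistic `f` under
the density `p` with respect to `ν`. This is a covariance only if `p` is normalized, which the
definition does not enforce. -/
noncomputable def densityCov (ν : Measure Ω) (p : Ω → ℝ) (f : Ω → κ → ℝ) : Matrix κ κ ℝ :=
  of fun i j ↦ (∫ ω, f ω i * f ω j * p ω ∂ν) - densityMean ν p f i * densityMean ν p f j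

variable [Fintype ι]

/-- The covariance matrix of the points `v m` under the weights `w m`, which are meant to sum to
one. -/
noncomputable def weightedCov (w : ι → ℝ) (v : ι → κ → ℝ) : Matrix κ κ ℝ :=
  (∑ m, w m • vecMulVec (v m) (v m)) - vecMulVec (∑ m, w m • v m) (∑ m, w m • v m)

lemma weightedCov_add_const {w : ι → ℝ} (hw : ∑ m, w m = 1) (v : ι → κ → ℝ) (c : κ → ℝ) :
    weightedCov w (fun m ↦ v m + c) = weightedCov w v := by
  ext i j
  simp only [weightedCov, Matrix.sub_apply, Matrix.sum_apply, Matrix.smul_apply, vecMulVec_apply,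
    Finset.sum_apply, Pi.smul_apply, Pi.add_apply, smul_eq_mul, mul_add, add_mul,
    Finset.sum_add_distrib]
  simp only [← mul_assoc, ← Finset.sum_mul, hw, mul_right_comm _ (c i)]
  ring

lemma weightedCov_mulVec [Fintype κ] (w : ι → ℝ) (v : ι → κ → ℝ) (B : Matrix κ' κ ℝ) :
    weightedCov w (fun m ↦ B *ᵥ v m) = B * weightedCov w v * Bᵀ := by
  have hB (a b : κ → ℝ) : vecMulVec (B *ᵥ a) (B *ᵥ b) = B * vecMulVec a b * Bᵀ := by
    rw [mul_vecMulVec, vecMulVec_mul, vecMul_transpose]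
  simp only [weightedCov, ← mulVec_smul, ← mulVec_sum, hB, Matrix.mul_sub, Matrix.sub_mul,
    Matrix.mul_sum, Matrix.sum_mul, Matrix.mul_smul, Matrix.smul_mul]

/-- **Law of total covariance.** -/
lemma densityCov_sum_mul {p : ι → Ω → ℝ} {f : Ω → κ → ℝ}
    (h₁ : ∀ m i, Integrable (fun ω ↦ f ω i * p m ω) ν)
    (h₂ : ∀ m i j, Integrable (fun ω ↦ f ω i * f ω j * p m ω) ν) (w : ι → ℝ) :
    densityCov ν (fun ω ↦ ∑ m, w m * p m ω) f =
      ∑ m, w m • densityCov ν (p m) f + weightedCov w fun m ↦ densityMean ν (p m) f := by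
  have hsum {g : Ω → ℝ} (hg : ∀ m, Integrable (fun ω ↦ g ω * p m ω) ν) :
      ∫ ω, g ω * ∑ m, w m * p m ω ∂ν = ∑ m, w m * ∫ ω, g ω * p m ω ∂ν := by
    simp_rw [Finset.mul_sum, mul_left_comm _ (w _)]
    rw [integral_finsetSum _ fun m _ ↦ (hg m).const_mul _]
    simp_rw [integral_const_mul]
  ext i j
  simp only [densityCov, weightedCov, densityMean, of_apply, hsum fun m ↦ h₁ m i,
    hsum fun m ↦ h₁ m j, hsum fun m ↦ h₂ m i j, Matrix.add_apply, Matrix.sub_apply,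
    Matrix.sum_apply, Matrix.smul_apply, vecMulVec_apply, Finset.sum_apply, Pi.smul_apply,
    smul_eq_mul, mul_sub, Finset.sum_sub_distrib]
  ring

end DensityCov

section GaussDensityMoments

variable {D : ℕ} {κ : Type*} {S : Matrix (Fin D) (Fin D) ℝ} (hS : S.PosDef)
  (B : Matrix κ (Fin D) ℝ) (c : κ → ℝ) (m : Fin D → ℝ)
include hS

lemma integrable_mulVec_add_mul_gaussDensity (i : κ) :
    Integrable fun y ↦ (B *ᵥ y + c) i * gaussDensity S m y :=
  (integrable_mul_gaussDensity_iff hS m _).2 <|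
    (memLp_mulVec_add_multivariateGaussian B c S _ i).integrable one_le_two

lemma integrable_mulVec_add_mul_mulVec_add_mul_gaussDensity (i j : κ) :
    Integrable fun y ↦ (B *ᵥ y + c) i * (B *ᵥ y + c) j * gaussDensity S m y :=
  (integrable_mul_gaussDensity_iff hS m fun y ↦ (B *ᵥ y + c) i * (B *ᵥ y + c) j).2 <|
    (memLp_mulVec_add_multivariateGaussian B c S _ i).integrable_mul
      (memLp_mulVec_add_multivariateGaussian B c S _ j)

lemma densityMean_gaussDensity :
    densityMean volume (gaussDensity S m) (fun y ↦ B *ᵥ y + c) = B *ᵥ m + c := by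
  ext i
  rw [densityMean, integral_mul_gaussDensity hS m fun y ↦ (B *ᵥ y + c) i,
    integral_mulVec_add_multivariateGaussian]

lemma densityCov_gaussDensity :
    densityCov volume (gaussDensity S m) (fun y ↦ B *ᵥ y + c) = B * S * Bᵀ := by
  ext i j
  rw [densityCov, of_apply, densityMean_gaussDensity hS,
    integral_mul_gaussDensity hS m fun y ↦ (B *ᵥ y + c) i * (B *ᵥ y + c) j,
    ← covariance_mulVec_add_multivariateGaussian hS.posSemidef B c (toLp 2 m),
    covariance_eq_sub (memLp_mulVec_add_multivariateGaussian B c S _ i)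
      (memLp_mulVec_add_multivariateGaussian B c S _ j),
    integral_mulVec_add_multivariateGaussian, integral_mulVec_add_multivariateGaussian]
  rfl

end GaussDensityMoments

section QuadraticForm

variable {n R : Type*} [Fintype n] [CommRing R] {M : Matrix n n R} (hM : M.IsSymm) (u v : n → R)
include hM

lemma dotProduct_mulVec_comm_of_isSymm : u ⬝ᵥ M *ᵥ v = v ⬝ᵥ M *ᵥ u := by
  rw [← dotProduct_transpose_mulVec, hM.eq]

lemma sub_dotProduct_mulVec_sub_of_isSymm :
    (u - v) ⬝ᵥ M *ᵥ (u - v) = u ⬝ᵥ M *ᵥ u - 2 * (u ⬝ᵥ M *ᵥ v) + v ⬝ᵥ M *ᵥ v := by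
  rw [mulVec_sub, sub_dotProduct, dotProduct_sub, dotProduct_sub,
    dotProduct_mulVec_comm_of_isSymm hM v u]
  ring

end QuadraticForm

section LinearGaussianPosterior

variable {D E : ℕ}

/-- Posterior covariance of a latent `y ∼ N(m, T)` given an observation `x ∼ N(A y, S)`: the
inverse of the sum of the prior precision `T⁻¹` and the likelihood precision `Aᵀ S⁻¹ A`. -/
noncomputable def posteriorCov (A : Matrix (Fin D) (Fin E) ℝ) (S : Matrix (Fin D) (Fin D) ℝ)
    (T : Matrix (Fin E) (Fin E) ℝ) : Matrix (Fin E) (Fin E) ℝ :=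
  (T⁻¹ + Aᵀ * S⁻¹ * A)⁻¹

/-- Posterior mean of a latent `y ∼ N(m, T)` given an observation `x ∼ N(A y, S)`, written as the
prior mean corrected by the gain matrix applied to the innovation `x - A m`. -/
noncomputable def posteriorMean (A : Matrix (Fin D) (Fin E) ℝ) (S : Matrix (Fin D) (Fin D) ℝ)
    (T : Matrix (Fin E) (Fin E) ℝ) (x : Fin D → ℝ) (m : Fin E → ℝ) : Fin E → ℝ :=
  m + (posteriorCov A S T * Aᵀ * S⁻¹) *ᵥ (x - A *ᵥ m)

variable (A : Matrix (Fin D) (Fin E) ℝ) {S : Matrix (Fin D) (Fin D) ℝ}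
  {T : Matrix (Fin E) (Fin E) ℝ} (hS : S.PosDef) (hT : T.PosDef)
include hS hT

lemma posDef_add_mul_mul_transpose : (S + A * T * Aᵀ).PosDef :=
  hS.add_posSemidef (hT.posSemidef.mul_mul_conjTranspose_same A)

lemma posDef_inv_add_transpose_mul_inv_mul : (T⁻¹ + Aᵀ * S⁻¹ * A).PosDef :=
  hT.inv.add_posSemidef (hS.inv.posSemidef.conjTranspose_mul_mul_same A)

lemma posDef_posteriorCov : (posteriorCov A S T).PosDef :=
  (posDef_inv_add_transpose_mul_inv_mul A hS hT).inv

lemma inv_posteriorCov : (posteriorCov A S T)⁻¹ = T⁻¹ + Aᵀ * S⁻¹ * A :=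
  nonsing_inv_nonsing_inv _
    ((isUnit_iff_isUnit_det _).1 (posDef_inv_add_transpose_mul_inv_mul A hS hT).isUnit)

lemma inv_mul_mul_posteriorCov_mul_transpose_mul_inv :
    S⁻¹ * A * posteriorCov A S T * Aᵀ * S⁻¹ = S⁻¹ - (S + A * T * Aᵀ)⁻¹ := by
  rw [add_mul_mul_inv_eq_sub _ _ _ _ hS.isUnit hT.isUnit
    (posDef_inv_add_transpose_mul_inv_mul A hS hT).isUnit, sub_sub_cancel, posteriorCov]

lemma det_mul_det_posteriorCov :
    (S + A * T * Aᵀ).det * (posteriorCov A S T).det = S.det * T.det := by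
  have hfactor : 1 + T * Aᵀ * S⁻¹ * A = T * (T⁻¹ + Aᵀ * S⁻¹ * A) := by
    rw [mul_add, mul_nonsing_inv _ ((isUnit_iff_isUnit_det T).1 hT.isUnit)]
    simp only [Matrix.mul_assoc]
  rw [Matrix.mul_assoc A, det_add_mul _ _ ((isUnit_iff_isUnit_det S).1 hS.isUnit), hfactor,
    det_mul, posteriorCov, det_nonsing_inv, Ring.inverse_eq_inv', mul_assoc, mul_assoc,
    mul_inv_cancel₀ (posDef_inv_add_transpose_mul_inv_mul A hS hT).det_pos.ne', mul_one]

lemma inv_mulVec_mulVec_posteriorMean_sub (x : Fin D → ℝ) (m : Fin E → ℝ) :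
    S⁻¹ *ᵥ (A *ᵥ posteriorMean A S T x m - x) = (S + A * T * Aᵀ)⁻¹ *ᵥ (A *ᵥ m - x) := by
  have h := congrArg (· *ᵥ (x - A *ᵥ m)) (inv_mul_mul_posteriorCov_mul_transpose_mul_inv A hS hT)
  simp only [sub_mulVec, ← mulVec_mulVec] at h
  rw [posteriorMean, mulVec_add, add_sub_right_comm, mulVec_add]
  simp only [← mulVec_mulVec]
  rw [h, ← neg_sub x, mulVec_neg, mulVec_neg]
  abel

/-- Completing the square in `y`. -/
lemma dotProduct_inv_mulVec_add_dotProduct_inv_mulVec (x : Fin D → ℝ) (m y : Fin E → ℝ) :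
    (x - A *ᵥ y) ⬝ᵥ S⁻¹ *ᵥ (x - A *ᵥ y) + (y - m) ⬝ᵥ T⁻¹ *ᵥ (y - m) =
      (x - A *ᵥ m) ⬝ᵥ (S + A * T * Aᵀ)⁻¹ *ᵥ (x - A *ᵥ m) +
        (y - posteriorMean A S T x m) ⬝ᵥ
          (posteriorCov A S T)⁻¹ *ᵥ (y - posteriorMean A S T x m) := by
  have hC := posDef_posteriorCov A hS hT
  set C := posteriorCov A S T
  set v := x - A *ᵥ m with hv
  set u := y - m with hu
  set w := (C * Aᵀ * S⁻¹) *ᵥ v with hw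
  have hxy : x - A *ᵥ y = v - A *ᵥ u := by
    rw [hv, hu, mulVec_sub]
    abel
  have hym : y - posteriorMean A S T x m = u - w := by
    rw [posteriorMean, sub_add_eq_sub_sub]
  have hA (z : Fin E → ℝ) (t : Fin D → ℝ) : z ⬝ᵥ Aᵀ *ᵥ t = (A *ᵥ z) ⬝ᵥ t := by
    rw [dotProduct_transpose_mulVec, dotProduct_comm]
  have hCw : C⁻¹ *ᵥ w = Aᵀ *ᵥ S⁻¹ *ᵥ v := by
    rw [hw, mulVec_mulVec, mulVec_mulVec, Matrix.mul_assoc C,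
      nonsing_inv_mul_cancel_left _ _ ((isUnit_iff_isUnit_det _).1 hC.isUnit)]
  have hAw : S⁻¹ *ᵥ A *ᵥ w = S⁻¹ *ᵥ v - (S + A * T * Aᵀ)⁻¹ *ᵥ v := by
    rw [← sub_mulVec, ← inv_mul_mul_posteriorCov_mul_transpose_mul_inv A hS hT, hw]
    simp only [mulVec_mulVec, Matrix.mul_assoc, C]
  have hCu : u ⬝ᵥ C⁻¹ *ᵥ u = u ⬝ᵥ T⁻¹ *ᵥ u + (A *ᵥ u) ⬝ᵥ S⁻¹ *ᵥ A *ᵥ u := by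
    rw [inv_posteriorCov A hS hT, add_mulVec, dotProduct_add, ← mulVec_mulVec, ← mulVec_mulVec, hA]
  have hS_symm : S⁻¹.IsSymm := hS.inv.isHermitian
  have hC_symm : C⁻¹.IsSymm := hC.inv.isHermitian
  rw [hxy, hym, sub_dotProduct_mulVec_sub_of_isSymm hS_symm,
    sub_dotProduct_mulVec_sub_of_isSymm hC_symm, hCw, hCu, hA, hA,
    dotProduct_mulVec_comm_of_isSymm hS_symm (A *ᵥ w), hAw,
    dotProduct_mulVec_comm_of_isSymm hS_symm v (A *ᵥ u), dotProduct_sub]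
  ring

lemma gaussDensity_mul_gaussDensity (x : Fin D → ℝ) (m y : Fin E → ℝ) :
    gaussDensity S (A *ᵥ y) x * gaussDensity T m y =
      gaussDensity (S + A * T * Aᵀ) (A *ᵥ m) x *
        gaussDensity (posteriorCov A S T) (posteriorMean A S T x m) y := by
  have hconst : ((2 * Real.pi) ^ D * S.det) ^ (-(1/2) : ℝ) *
        ((2 * Real.pi) ^ E * T.det) ^ (-(1/2) : ℝ) =
      ((2 * Real.pi) ^ D * (S + A * T * Aᵀ).det) ^ (-(1/2) : ℝ) *
        ((2 * Real.pi) ^ E * (posteriorCov A S T).det) ^ (-(1/2) : ℝ) := by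
    have hS_pos := hS.det_pos
    have hT_pos := hT.det_pos
    have hSig_pos := (posDef_add_mul_mul_transpose A hS hT).det_pos
    have hC_pos := (posDef_posteriorCov A hS hT).det_pos
    rw [← Real.mul_rpow (by positivity) (by positivity),
      ← Real.mul_rpow (by positivity) (by positivity), mul_mul_mul_comm _ S.det,
      mul_mul_mul_comm _ (S + A * T * Aᵀ).det, det_mul_det_posteriorCov A hS hT]
  simp only [gaussDensity]
  rw [mul_mul_mul_comm, hconst, ← Real.exp_add, ← add_div, ← neg_add,
    dotProduct_inv_mulVec_add_dotProduct_inv_mulVec A hS hT, neg_add, add_div, Real.exp_add,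
    mul_mul_mul_comm]

end LinearGaussianPosterior

section GaussianMixture

variable {ι κ : Type*} [Fintype ι] {D E : ℕ}

/-- The density `∑ₘ cₘ N(·; μₘ, T)` of a Gaussian mixture with shared covariance `T`; the weights
`c` need not be normalized. -/
noncomputable def gaussMixture (c : ι → ℝ) (T : Matrix (Fin D) (Fin D) ℝ) (μ : ι → Fin D → ℝ)
    (y : Fin D → ℝ) : ℝ :=
  ∑ m, c m * gaussDensity T (μ m) y

/-- The posterior probability that `x`, drawn from the mixture `gaussMixture c T μ`, comes from the
`m`-th component. -/
noncomputable def responsibility (c : ι → ℝ) (T : Matrix (Fin D) (Fin D) ℝ) (μ : ι → Fin D → ℝ)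
    (x : Fin D → ℝ) (m : ι) : ℝ :=
  c m * gaussDensity T (μ m) x / gaussMixture c T μ x

/-- Bayes' rule: the posterior density with likelihood `l` and prior density `p`, with respect to
the ambient volume. -/
noncomputable def bayesDensity {Ω : Type*} [MeasureSpace Ω] (l p : Ω → ℝ) (ω : Ω) : ℝ :=
  l ω * p ω / ∫ ω', l ω' * p ω'

variable {c : ι → ℝ} {S : Matrix (Fin D) (Fin D) ℝ} {T : Matrix (Fin E) (Fin E) ℝ}

lemma gaussMixture_pos (hc : 0 < c) (hT : T.PosDef) (μ : ι → Fin E → ℝ) (x : Fin E → ℝ) :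
    0 < gaussMixture c T μ x := by
  obtain ⟨hc_nonneg, m, hm⟩ := Pi.lt_def.1 hc
  exact Finset.sum_pos' (fun m _ ↦ mul_nonneg (hc_nonneg m) (gaussDensity_pos hT _ _).le)
    ⟨m, Finset.mem_univ m, mul_pos hm (gaussDensity_pos hT _ _)⟩

lemma integral_gaussMixture (c : ι → ℝ) (hT : T.PosDef) (μ : ι → Fin E → ℝ) :
    ∫ y, gaussMixture c T μ y = ∑ m, c m := by
  simp only [gaussMixture]
  rw [integral_finsetSum _ fun m _ ↦ (integrable_gaussDensity hT (μ m)).const_mul _]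
  simp only [integral_const_mul, integral_gaussDensity hT, mul_one]

lemma sum_responsibility (hc : 0 < c) (hT : T.PosDef) (μ : ι → Fin E → ℝ) (x : Fin E → ℝ) :
    ∑ m, responsibility c T μ x m = 1 := by
  simp only [responsibility, ← Finset.sum_div]
  exact div_self (gaussMixture_pos hc hT μ x).ne'

lemma responsibility_const {r : ℝ} (hr : r ≠ 0) (T : Matrix (Fin E) (Fin E) ℝ)
    (μ : ι → Fin E → ℝ) (x : Fin E → ℝ) (m : ι) :
    responsibility (fun _ ↦ r) T μ x m =
      gaussDensity T (μ m) x / ∑ m', gaussDensity T (μ m') x := by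
  rw [responsibility, gaussMixture, ← Finset.mul_sum, mul_div_mul_left _ _ hr]

lemma densityCov_gaussMixture (w : ι → ℝ) (hT : T.PosDef) (μ : ι → Fin E → ℝ)
    (B : Matrix κ (Fin E) ℝ) (d : κ → ℝ) :
    densityCov volume (gaussMixture w T μ) (fun y ↦ B *ᵥ y + d) =
      (∑ m, w m) • (B * T * Bᵀ) + weightedCov w fun m ↦ B *ᵥ μ m + d := by
  have htotal := densityCov_sum_mul
    (fun m i ↦ integrable_mulVec_add_mul_gaussDensity hT B d (μ m) i)
    (fun m i j ↦ integrable_mulVec_add_mul_mulVec_add_mul_gaussDensity hT B d (μ m) i j) w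
  simp only [densityCov_gaussDensity hT, densityMean_gaussDensity hT, ← Finset.sum_smul] at htotal
  exact htotal

lemma bayesDensity_gaussMixture (hS : S.PosDef) (hT : T.PosDef) (A : Matrix (Fin D) (Fin E) ℝ)
    (c : ι → ℝ) (μ : ι → Fin E → ℝ) (x : Fin D → ℝ) :
    bayesDensity (fun y ↦ gaussDensity S (A *ᵥ y) x) (gaussMixture c T μ) =
      gaussMixture (responsibility c (S + A * T * Aᵀ) (fun m ↦ A *ᵥ μ m) x)
        (posteriorCov A S T) (fun m ↦ posteriorMean A S T x (μ m)) := by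
  have hjoint (y : Fin E → ℝ) : gaussDensity S (A *ᵥ y) x * gaussMixture c T μ y =
      gaussMixture (fun m ↦ c m * gaussDensity (S + A * T * Aᵀ) (A *ᵥ μ m) x)
        (posteriorCov A S T) (fun m ↦ posteriorMean A S T x (μ m)) y := by
    simp only [gaussMixture, Finset.mul_sum, mul_left_comm _ (c _),
      gaussDensity_mul_gaussDensity A hS hT, mul_assoc]
  ext y
  simp only [bayesDensity, hjoint, integral_gaussMixture _ (posDef_posteriorCov A hS hT)]
  simp only [gaussMixture, responsibility, Finset.sum_div, div_mul_eq_mul_div]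

theorem proxy_post_cov_gaussian_mixture_general (hS : S.PosDef) (hT : T.PosDef)
    (A : Matrix (Fin D) (Fin E) ℝ) {Sig : Matrix (Fin D) (Fin D) ℝ} (hSig : Sig = S + A * T * Aᵀ)
    (hc : 0 < c) (μ : ι → Fin E → ℝ) (x : Fin D → ℝ) :
    densityCov volume (bayesDensity (fun y ↦ gaussDensity S (A *ᵥ y) x) (gaussMixture c T μ))
        (fun y ↦ S⁻¹ *ᵥ (A *ᵥ y - x)) =
      S⁻¹ - Sig⁻¹ + Sig⁻¹ *
        (A * weightedCov (responsibility c Sig (fun m ↦ A *ᵥ μ m) x) μ * Aᵀ) * Sig⁻¹ := by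
  subst hSig
  have hSig := posDef_add_mul_mul_transpose A hS hT
  have hS_symm : S⁻¹ᵀ = S⁻¹ := hS.inv.isHermitian
  have hSig_symm : (S + A * T * Aᵀ)⁻¹ᵀ = (S + A * T * Aᵀ)⁻¹ := hSig.inv.isHermitian
  have hw := sum_responsibility hc hSig (fun m ↦ A *ᵥ μ m) x
  have haffine (M : Matrix (Fin D) (Fin D) ℝ) (y : Fin E → ℝ) :
      M *ᵥ (A *ᵥ y - x) = (M * A) *ᵥ y + -(M *ᵥ x) := by
    rw [mulVec_sub, mulVec_mulVec, sub_eq_add_neg]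
  rw [bayesDensity_gaussMixture hS hT]
  simp only [haffine S⁻¹]
  rw [densityCov_gaussMixture _ (posDef_posteriorCov A hS hT), hw, one_smul]
  simp only [← haffine S⁻¹, inv_mulVec_mulVec_posteriorMean_sub A hS hT]
  simp only [haffine]
  rw [weightedCov_add_const hw, weightedCov_mulVec, transpose_mul, transpose_mul, hS_symm,
    hSig_symm, ← inv_mul_mul_posteriorCov_mul_transpose_mul_inv A hS hT]
  simp only [Matrix.mul_assoc]

end GaussianMixture

section ScalarTransition

variable {D M : ℕ}

lemma dataDensity_eq_gaussMixture (μ : Fin M → Fin D → ℝ) (σ₀ : ℝ) :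
    dataDensity μ σ₀ = gaussMixture (fun _ ↦ (M : ℝ)⁻¹) (σ₀ ^ 2 • 1) μ := by
  ext y
  rw [gaussMixture, dataDensity, Finset.mul_sum]

lemma proxyPostCov_eq_densityCov (μ : Fin M → Fin D → ℝ) (σ₀ α : ℝ)
    (S : Matrix (Fin D) (Fin D) ℝ) (x : Fin D → ℝ) :
    proxyPostCov μ σ₀ α S x = densityCov volume
      (bayesDensity (fun y ↦ gaussDensity S ((α • 1 : Matrix _ _ ℝ) *ᵥ y) x)
        (gaussMixture (fun _ ↦ (M : ℝ)⁻¹) (σ₀ ^ 2 • 1) μ))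
      fun y ↦ S⁻¹ *ᵥ ((α • 1 : Matrix _ _ ℝ) *ᵥ y - x) := by
  simp only [← dataDensity_eq_gaussMixture, smul_mulVec, one_mulVec]
  rfl

lemma mixCovMu_eq_weightedCov (hM : M ≠ 0) (μ : Fin M → Fin D → ℝ) (α : ℝ)
    (Sig : Matrix (Fin D) (Fin D) ℝ) (x : Fin D → ℝ) :
    mixCovMu μ α Sig x = weightedCov
      (responsibility (fun _ ↦ (M : ℝ)⁻¹) Sig (fun m ↦ (α • 1 : Matrix _ _ ℝ) *ᵥ μ m) x) μ := by
  have hw : responsibility (fun _ ↦ (M : ℝ)⁻¹) Sig (fun m ↦ (α • 1 : Matrix _ _ ℝ) *ᵥ μ m) x =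
      fun m ↦ mixW μ α Sig m x := by
    ext m
    rw [responsibility_const (by positivity), mixW]
    simp only [smul_mulVec, one_mulVec]
  rw [hw]
  rfl

end ScalarTransition

/-- for Gaussian-mixture training data with component covariance `σ₀² I`,
with `Σ̃ := α² σ₀² I + S`, the posterior covariance of the proxy score satisfies
`Cov_{π_x}(s̃) = S⁻¹ − Σ̃⁻¹ + α² Σ̃⁻¹ Cov_w̃(μ)(x) Σ̃⁻¹`. -/
theorem proxy_post_cov_gaussian_mixture {D M : ℕ} (hD : 1 ≤ D) (hM : 1 ≤ M)
    (μ : Fin M → Fin D → ℝ) (α σ₀ : ℝ) (hα : 0 < α) (hσ₀ : 0 < σ₀)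
    (S : Matrix (Fin D) (Fin D) ℝ) (hS : S.PosDef)
    (Sig : Matrix (Fin D) (Fin D) ℝ)
    (hSig : Sig = (α ^ 2 * σ₀ ^ 2) • (1 : Matrix (Fin D) (Fin D) ℝ) + S) :
    ∀ (x : Fin D → ℝ) (i j : Fin D),
      proxyPostCov μ σ₀ α S x i j =
        S⁻¹ i j - Sig⁻¹ i j + (α ^ 2 • (Sig⁻¹ * mixCovMu μ α Sig x * Sig⁻¹)) i j := by
  intro x i j
  have hM₀ : M ≠ 0 := by lia
  have hc : 0 < fun _ : Fin M ↦ (M : ℝ)⁻¹ :=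
    Pi.lt_def.2 ⟨fun _ ↦ by positivity, ⟨0, hM⟩, by positivity⟩
  have hSig' : Sig = S + (α • 1) * (σ₀ ^ 2 • 1) * (α • 1)ᵀ := by
    rw [hSig, add_comm, transpose_smul, transpose_one]
    simp only [smul_mul_smul_comm, Matrix.one_mul]
    ring_nf
  rw [proxyPostCov_eq_densityCov, proxy_post_cov_gaussian_mixture_general hS
    (PosDef.one.smul (by positivity)) _ hSig' hc, ← mixCovMu_eq_weightedCov hM₀]
  simp [pow_two, mul_assoc]
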